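/- Let G be a group in the class 𝒟₀ and let u be an indivisible element of G. Let m be a non-zero integer. Then the free product with amalgamation H = G *_{(u = x^m)} ⟨x⟩ also belongs to the class 𝒟₀. -/

import Mathlib

/-!
Call `f` a power commensurator of `g` if it conjugates some non-trivial power of `g` to a
non-trivial power of `g`. The elements mentioned by the conditions defining `𝒟₀` at `g` are all
power commensurators of `g`, so it suffices to find, for each `g ≠ 1`, a subgroup in `𝒟₀` containing
them. In `P = A *_B C` with `B` malnormal in `A`, every element is conjugate either into a factor or
to a cyclically reduced product of `n > 0` syllables. A power commensurator of an element of a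
factor stays in that factor, except that a conjugate into `B` of an element of `A` has to be viewed
in `C`. For cyclically reduced `g`, comparing syllable lengths shows that the centralizer of `g` and
of its powers is torsion-free abelian, and that `c ↦ cⁿ` embeds it into `⟨g⟩`; hence it is infinite
cyclic, and it contains all power commensurators of `g`.

For `u` indivisible, `⟨u⟩` is malnormal in `G`: by (4) an element conjugating `uʳ ≠ 1` into `⟨u⟩`
centralizes `uʳ`, so by (3) and (5) it lies in `⟨u⟩`.
-/

universe u v w x

/-- `P`, together with `ja : A →* P` and `jb : B →* P`, is the free product of `A` and `B`
amalgamating `H` along `φ : H →* A` and `ψ : H →* B`, i.e. the pushout of `φ` and `ψ` in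
the category of groups. -/
def IsAmalgamatedFreeProduct {H : Type u} {A : Type v} {B : Type w} {P : Type x}
    [Group H] [Group A] [Group B] [Group P]
    (φ : H →* A) (ψ : H →* B) (ja : A →* P) (jb : B →* P) : Prop :=
  ja.comp φ = jb.comp ψ ∧
    ∀ (Q : Type (max u v w x)) [Group Q] (f : A →* Q) (g : B →* Q),
      f.comp φ = g.comp ψ → ∃! h : P →* Q, h.comp ja = f ∧ h.comp jb = g

/-- An element `g` of a group is indivisible if it is not a proper power. -/
def Indivisible {G : Type*} [Group G] (g : G) : Prop :=
  ¬ ∃ (v : G) (n : ℕ), 1 < n ∧ v ^ n = g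

/-- `g` has no `p`-th root in `G` for some prime `p`. -/
def NoPrimeRoot {G : Type*} [Group G] (g : G) : Prop :=
  ∃ p : ℕ, p.Prime ∧ ¬ ∃ h : G, h ^ p = g

/-- G. Baumslag's class `𝒟` (for the set of all primes): (1) extraction of roots is
unique; (2) the centralizer of an element with no `p`-th root (some prime `p`) embeds in
the additive group `ℚ`; (3) such an element satisfies `C_G(g^r) = C_G(g)` for `r ≠ 0`;
(4) for such an element, `f⁻¹ g^r f = g^s` with `r, s ≠ 0` implies `r = s`. -/
def ClassD (G : Type*) [Group G] : Prop :=
  (∀ (g h : G) (r : ℤ), r ≠ 0 → g ^ r = h ^ r → g = h) ∧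
    (∀ g : G, NoPrimeRoot g →
      ∃ f : Subgroup.centralizer ({g} : Set G) →* Multiplicative ℚ, Function.Injective f) ∧
    (∀ g : G, NoPrimeRoot g → ∀ r : ℤ, r ≠ 0 →
      Subgroup.centralizer ({g ^ r} : Set G) = Subgroup.centralizer ({g} : Set G)) ∧
    (∀ g : G, NoPrimeRoot g → ∀ (f : G) (r s : ℤ), r ≠ 0 → s ≠ 0 →
      f⁻¹ * g ^ r * f = g ^ s → r = s)

/-- G. Baumslag's class `𝒟₀`: the class `𝒟` together with the condition (5) that the
centralizer of every indivisible element `g` is `⟨g⟩`. -/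
def ClassD0 (G : Type*) [Group G] : Prop :=
  ClassD G ∧ ∀ g : G, Indivisible g →
    Subgroup.centralizer ({g} : Set G) = Subgroup.zpowers g

section PowerCommensurator

variable {K : Type*} {P : Type*} [Group K] [Group P]

/-- The elements conjugating some non-trivial power of `g` to a non-trivial power of `g`. When `g`
has infinite order this is the commensurator of `⟨g⟩`. It contains every element that conditions
(1)–(5) on `g` involve, so those conditions can be checked in any subgroup containing it. -/
def powerCommensurator (g : P) : Subgroup P where
  carrier := {f | ∃ r s : ℤ, r ≠ 0 ∧ s ≠ 0 ∧ SemiconjBy f (g ^ r) (g ^ s)}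
  one_mem' := ⟨1, 1, one_ne_zero, one_ne_zero, .one_left _⟩
  mul_mem' := by
    rintro f f' ⟨r, s, hr, hs, hf⟩ ⟨r', s', hr', hs', hf'⟩
    refine ⟨r' * r, s * s', mul_ne_zero hr' hr, mul_ne_zero hs hs', ?_⟩
    have h := hf.zpow_right s'
    have h' := hf'.zpow_right r
    rw [← zpow_mul, ← zpow_mul] at h h'
    rw [mul_comm r] at h
    exact h.mul_left h'
  inv_mem' := by
    rintro f ⟨r, s, hr, hs, hf⟩
    exact ⟨s, r, hs, hr, SemiconjBy.inv_symm_left_iff.2 hf⟩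

theorem mem_powerCommensurator {g f : P} :
    f ∈ powerCommensurator g ↔ ∃ r s : ℤ, r ≠ 0 ∧ s ≠ 0 ∧ SemiconjBy f (g ^ r) (g ^ s) :=
  Iff.rfl

theorem mem_powerCommensurator_of_commute {g f : P} {r : ℤ} (hr : r ≠ 0) (h : Commute f (g ^ r)) :
    f ∈ powerCommensurator g :=
  ⟨r, r, hr, hr, h⟩

theorem self_mem_powerCommensurator (g : P) : g ∈ powerCommensurator g :=
  mem_powerCommensurator_of_commute one_ne_zero (Commute.self_zpow g 1)

theorem centralizer_zpow_le_powerCommensurator (g : P) {r : ℤ} (hr : r ≠ 0) :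
    Subgroup.centralizer {g ^ r} ≤ powerCommensurator g := fun _ hf =>
  mem_powerCommensurator_of_commute hr (Subgroup.mem_centralizer_singleton_iff.1 hf)

theorem map_powerCommensurator_conj (g c : P) :
    (powerCommensurator g).map (MulAut.conj c).toMonoidHom = powerCommensurator (c * g * c⁻¹) := by
  ext f
  rw [Subgroup.mem_map_equiv, mem_powerCommensurator, mem_powerCommensurator]
  refine exists₂_congr fun r s => and_congr_right fun _ => and_congr_right fun _ => ?_
  rw [conj_zpow, conj_zpow, MulAut.conj_symm_apply, SemiconjBy, SemiconjBy, ← mul_right_inj c,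
    ← mul_left_inj c⁻¹]
  simp only [mul_assoc, mul_inv_cancel_left, mul_inv_cancel, mul_one]

theorem map_centralizer_singleton {j : K →* P} (hj : Function.Injective j) {k : K}
    (h : Subgroup.centralizer {j k} ≤ j.range) :
    (Subgroup.centralizer {k}).map j = Subgroup.centralizer {j k} := by
  have mem_iff (l : K) : j l ∈ Subgroup.centralizer {j k} ↔ l ∈ Subgroup.centralizer {k} := by
    rw [Subgroup.mem_centralizer_singleton_iff, Subgroup.mem_centralizer_singleton_iff, ← map_mul,
      ← map_mul, hj.eq_iff]
  refine le_antisymm (Subgroup.map_le_iff_le_comap.2 fun l hl => (mem_iff l).2 hl) fun f hf => ?_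
  obtain ⟨l, rfl⟩ := h hf
  exact ⟨l, (mem_iff l).1 hf, rfl⟩

theorem mem_range_of_zpow_eq {j : K →* P} {k : K} (hle : powerCommensurator (j k) ≤ j.range)
    {f : P} {r : ℤ} (hr : r ≠ 0) (h : j k ^ r = f ^ r) : f ∈ j.range :=
  hle (mem_powerCommensurator_of_commute hr (h ▸ Commute.self_zpow f r))

theorem map_centralizer_zpow {j : K →* P} (hj : Function.Injective j) {k : K}
    (hle : powerCommensurator (j k) ≤ j.range) {r : ℤ} (hr : r ≠ 0) :
    (Subgroup.centralizer {k ^ r}).map j = Subgroup.centralizer {j k ^ r} := by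
  have h := (centralizer_zpow_le_powerCommensurator (j k) hr).trans hle
  rw [← map_zpow] at h ⊢
  exact map_centralizer_singleton hj h

theorem map_centralizer {j : K →* P} (hj : Function.Injective j) {k : K}
    (hle : powerCommensurator (j k) ≤ j.range) :
    (Subgroup.centralizer {k}).map j = Subgroup.centralizer {j k} := by
  simpa only [zpow_one] using map_centralizer_zpow hj hle one_ne_zero

end PowerCommensurator

theorem NoPrimeRoot.ne_one {P : Type*} [Group P] {g : P} (hg : NoPrimeRoot g) : g ≠ 1 := by
  rintro rfl
  obtain ⟨p, -, hp⟩ := hg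
  exact hp ⟨1, one_pow p⟩

theorem NoPrimeRoot.of_map {K P : Type*} [Group K] [Group P] (j : K →* P) {k : K}
    (hk : NoPrimeRoot (j k)) : NoPrimeRoot k := by
  obtain ⟨p, hp, hk⟩ := hk
  exact ⟨p, hp, fun ⟨l, hl⟩ => hk ⟨j l, by rw [← map_pow, hl]⟩⟩

theorem Indivisible.of_map {K P : Type*} [Group K] [Group P] (j : K →* P) {k : K}
    (hk : Indivisible (j k)) : Indivisible k := fun ⟨v, n, hn, hv⟩ =>
  hk ⟨j v, n, hn, by rw [← map_pow, hv]⟩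

theorem Indivisible.noPrimeRoot {P : Type*} [Group P] {g : P} (hg : Indivisible g) :
    NoPrimeRoot g :=
  ⟨2, Nat.prime_two, fun ⟨v, hv⟩ => hg ⟨v, 2, one_lt_two, hv⟩⟩

namespace ClassD0

theorem of_powerCommensurator_le_range {P : Type*} [Group P]
    (h : ∀ g : P, g ≠ 1 → ∃ (K : Type v) (_ : Group K) (j : K →* P),
      Function.Injective j ∧ ClassD0 K ∧ powerCommensurator g ≤ j.range) : ClassD0 P := by
  have exists_preimage (g : P) (hg : g ≠ 1) : ∃ (K : Type v) (_ : Group K) (j : K →* P) (k : K),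
      Function.Injective j ∧ ClassD0 K ∧ powerCommensurator (j k) ≤ j.range ∧ j k = g := by
    obtain ⟨K, _, j, hj, hK, hle⟩ := h g hg
    obtain ⟨k, rfl⟩ := hle (self_mem_powerCommensurator g)
    exact ⟨K, _, j, k, hj, hK, hle, rfl⟩
  have root_eq {g f : P} {r : ℤ} (hr : r ≠ 0) (hg : g ≠ 1) (hgf : g ^ r = f ^ r) : g = f := by
    obtain ⟨K, _, j, k, hj, hK, hle, rfl⟩ := exists_preimage g hg
    obtain ⟨l, rfl⟩ := mem_range_of_zpow_eq hle hr hgf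
    rw [← map_zpow, ← map_zpow] at hgf
    rw [hK.1.1 k l r hr (hj hgf)]
  refine ⟨⟨fun g f r hr hgf => ?_, fun g hg => ?_, fun g hg r hr => ?_,
    fun g hg f r s hr hs hf => ?_⟩, fun g hg => ?_⟩
  · by_cases hg : g = 1
    · by_cases hf : f = 1
      · rw [hg, hf]
      · exact (root_eq hr hf hgf.symm).symm
    · exact root_eq hr hg hgf
  · obtain ⟨K, _, j, k, hj, hK, hle, rfl⟩ := exists_preimage g hg.ne_one
    obtain ⟨e, he⟩ := hK.1.2.1 k (hg.of_map j)
    let t := (Subgroup.equivMapOfInjective (Subgroup.centralizer {k}) j hj).symm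
    rw [← map_centralizer hj hle]
    exact ⟨e.comp t.toMonoidHom, he.comp t.injective⟩
  · obtain ⟨K, _, j, k, hj, hK, hle, rfl⟩ := exists_preimage g hg.ne_one
    rw [← map_centralizer_zpow hj hle hr, ← map_centralizer hj hle,
      hK.1.2.2.1 k (hg.of_map j) r hr]
  · obtain ⟨K, _, j, k, hj, hK, hle, rfl⟩ := exists_preimage g hg.ne_one
    obtain ⟨l, rfl⟩ := hle (x := f) ⟨s, r, hs, hr, by rw [SemiconjBy, ← hf]; group⟩
    exact hK.1.2.2.2 k (hg.of_map j) l r s hr hs (hj (by simpa using hf))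
  · obtain ⟨K, _, j, k, hj, hK, hle, rfl⟩ := exists_preimage g hg.noPrimeRoot.ne_one
    rw [← map_centralizer hj hle, hK.2 k (hg.of_map j), MonoidHom.map_zpowers]

theorem of_mulEquiv {K : Type v} {P : Type*} [Group K] [Group P] (hK : ClassD0 K) (e : K ≃* P) :
    ClassD0 P :=
  of_powerCommensurator_le_range fun _ _ => ⟨K, _, e.toMonoidHom, e.injective, hK,
    fun f _ => ⟨e.symm f, e.apply_symm_apply f⟩⟩

end ClassD0

theorem Indivisible.ne_one {P : Type*} [Group P] {g : P} (hg : Indivisible g) : g ≠ 1 :=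
  hg.noPrimeRoot.ne_one

theorem Indivisible.zpowers_eq_top {K : Type*} [Group K] [IsCyclic K] {g : K}
    (hg : Indivisible g) : Subgroup.zpowers g = ⊤ := by
  obtain ⟨c, hc⟩ := IsCyclic.exists_generator (α := K)
  obtain ⟨z, rfl⟩ := hc g
  have hz : z.natAbs = 1 := by
    have hz₁ : ¬ 1 < z.natAbs := fun h => hg ⟨c ^ z.sign, z.natAbs, h, by
      rw [← zpow_natCast, ← zpow_mul, Int.sign_mul_natAbs]⟩
    have hz₀ : z ≠ 0 := by rintro rfl; exact hg.ne_one (zpow_zero c)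
    omega
  refine (Subgroup.eq_top_iff' _).2 fun f => ?_
  have hc' := hc f
  rcases Int.natAbs_eq_iff.1 hz with rfl | rfl <;> simpa using hc'

namespace ClassD0

theorem multiplicative_int : ClassD0 (Multiplicative ℤ) := by
  have centralizer_eq_top (g : Multiplicative ℤ) : Subgroup.centralizer {g} = ⊤ :=
    (Subgroup.eq_top_iff' _).2 fun f => Subgroup.mem_centralizer_singleton_iff.2 (mul_comm f g)
  refine ⟨⟨fun g h r hr hgh => zpow_left_injective hr hgh, fun g _ => ?_, fun g _ r _ => ?_,
    fun g hg f r s _ _ hf => ?_⟩, fun g hg => ?_⟩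
  · let cast : Multiplicative ℤ →* Multiplicative ℚ :=
      AddMonoidHom.toMultiplicative (Int.castAddHom ℚ)
    have hcast : Function.Injective cast := Int.cast_injective (α := ℚ)
    exact ⟨cast.comp (Subgroup.subtype _), hcast.comp (Subgroup.subtype_injective _)⟩
  · rw [centralizer_eq_top, centralizer_eq_top]
  · rw [mul_comm f⁻¹, inv_mul_cancel_right] at hf
    exact injective_zpow_iff_not_isOfFinOrder.2
      (not_isOfFinOrder_of_isMulTorsionFree hg.ne_one) hf
  · rw [centralizer_eq_top, hg.zpowers_eq_top]

theorem of_isCyclic {K : Type*} [Group K] [IsCyclic K] [Infinite K] : ClassD0 K :=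
  multiplicative_int.of_mulEquiv intCyclicMulEquiv

end ClassD0

theorem ClassD0.isMulTorsionFree {K : Type*} [Group K] (hK : ClassD0 K) : IsMulTorsionFree K where
  pow_left_injective n hn g h hgh := hK.1.1 g h n (Nat.cast_ne_zero.2 hn) (by simpa using hgh)

theorem injective_zpowersHom {K : Type*} [Group K] [IsMulTorsionFree K] {g : K} (hg : g ≠ 1) :
    Function.Injective (zpowersHom K g) :=
  injective_zpow_iff_not_isOfFinOrder.2 (not_isOfFinOrder_of_isMulTorsionFree hg)

section ClassD0At

variable {P : Type*} [Group P] {g : P}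

/-- The conditions defining `𝒟₀` hold at `g` because the power commensurator of `g` lies in a
subgroup belonging to `𝒟₀`. -/
def ClassD0At (g : P) : Prop :=
  ∃ S : Subgroup P, ClassD0 S ∧ powerCommensurator g ≤ S

theorem ClassD0At.of_isConj {h : P} (hg : ClassD0At g) (hgh : IsConj g h) : ClassD0At h := by
  obtain ⟨S, hS, hle⟩ := hg
  obtain ⟨c, rfl⟩ := isConj_iff.1 hgh
  refine ⟨S.map (MulAut.conj c).toMonoidHom,
    hS.of_mulEquiv (S.equivMapOfInjective _ (MulAut.conj c).injective), ?_⟩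
  rw [← map_powerCommensurator_conj]
  exact Subgroup.map_mono hle

theorem ClassD0.of_classD0At (h : ∀ g : P, g ≠ 1 → ClassD0At g) : ClassD0 P :=
  .of_powerCommensurator_le_range fun g hg =>
    let ⟨S, hS, hle⟩ := h g hg
    ⟨S, inferInstance, S.subtype, S.subtype_injective, hS, by rwa [S.range_subtype]⟩

end ClassD0At

section Malnormal

variable {G P : Type*} [Group G] [Group P]

/-- `B` is malnormal in `A`: no conjugate of `B` by an element of `A` outside `B` meets `B`
non-trivially. The inclusion `B ≤ A` is not part of the definition. -/
def IsMalnormal (B A : Subgroup G) : Prop :=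
  ∀ a ∈ A, a ∉ B → ∀ b ∈ B, a⁻¹ * b * a ∈ B → b = 1

namespace IsMalnormal

variable {A B : Subgroup G}

theorem map (h : IsMalnormal B A) {j : G →* P} (hj : Function.Injective j) :
    IsMalnormal (B.map j) (A.map j) := by
  rintro _ ⟨a, ha, rfl⟩ haB _ ⟨b, hb, rfl⟩ hab
  rw [← map_inv, ← map_mul, ← map_mul, Subgroup.mem_map_iff_mem hj] at hab
  rw [Subgroup.mem_map_iff_mem hj] at haB
  rw [h a ha haB b hb hab, map_one]

theorem mem_of_zpow_mem (h : IsMalnormal B A) {a : G} (ha : a ∈ A) {r : ℤ} (hr : a ^ r ∈ B)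
    (hr₁ : a ^ r ≠ 1) : a ∈ B := by
  by_contra haB
  refine hr₁ (h a ha haB _ hr ?_)
  rwa [mul_assoc, (Commute.zpow_self a r).eq, inv_mul_cancel_left]

end IsMalnormal

theorem ClassD0.isMalnormal_zpowers (hG : ClassD0 G) {u : G} (hu : Indivisible u) :
    IsMalnormal (Subgroup.zpowers u) ⊤ := by
  intro a _ ha b hb hab
  obtain ⟨r, rfl⟩ := Subgroup.mem_zpowers_iff.1 hb
  obtain ⟨s, hs⟩ := Subgroup.mem_zpowers_iff.1 hab
  have hconj : SemiconjBy a (u ^ s) (u ^ r) := by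
    rw [SemiconjBy, hs, mul_assoc, mul_inv_cancel_left]
  by_contra hr₁
  have hr : r ≠ 0 := by rintro rfl; exact hr₁ (zpow_zero u)
  have hs₀ : s ≠ 0 := by rintro rfl; exact hr₁ (hconj.eq_one_iff.1 (zpow_zero u))
  obtain rfl := hG.1.2.2.2 u hu.noPrimeRoot a r s hr hs₀ hs.symm
  refine ha ?_
  rwa [← hG.2 u hu, ← hG.1.2.2.1 u hu.noPrimeRoot r hr, Subgroup.mem_centralizer_singleton_iff]

end Malnormal

theorem commute_pow_natAbs {P : Type*} [Group P] {c g : P} {r : ℤ} (h : Commute c (g ^ r)) :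
    Commute c (g ^ r.natAbs) := by
  rw [← zpow_natCast, ← Int.mul_sign_self, zpow_mul]
  exact h.zpow_right r.sign

section Alternating

variable {P : Type*} [Group P] {F : Bool → Subgroup P} {B : Subgroup P}

/-- `Alternating F B i k n h`: up to an element of `B`, the element `h` is a product of `n`
syllables taken alternately from `F i ∖ B` and `F (!i) ∖ B`, where the first syllable lies in `F i`
and the last one in `F (!k)`. Thus `k` is the factor from which a further syllable has to be taken,
and `k = i` when `n = 0`. -/
inductive Alternating (F : Bool → Subgroup P) (B : Subgroup P) : Bool → Bool → ℕ → P → Prop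
  | base {i : Bool} {b : P} (hb : b ∈ B) : Alternating F B i i 0 b
  | cons {i k : Bool} {n : ℕ} {s h : P} (hs : s ∈ F i) (hsB : s ∉ B)
      (H : Alternating F B (!i) k n h) : Alternating F B i k (n + 1) (s * h)

namespace Alternating

variable {i i' j k k' : Bool} {m n : ℕ} {b g h s : P}

theorem mem_of_zero (H : Alternating F B i k 0 h) : h ∈ B := by
  cases H with
  | base hb => exact hb

theorem eq_of_zero (H : Alternating F B i k 0 h) : i = k := by
  cases H with
  | base => rfl

theorem length_ne_zero (H : Alternating F B (!i) i n h) : n ≠ 0 := by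
  rintro rfl
  exact Bool.not_ne_self i H.eq_of_zero

theorem exists_cons (H : Alternating F B i k (n + 1) h) :
    ∃ s ∈ F i, s ∉ B ∧ ∃ h', Alternating F B (!i) k n h' ∧ h = s * h' := by
  cases H with
  | cons hs hsB H => exact ⟨_, hs, hsB, _, H, rfl⟩

theorem single (hs : s ∈ F i) (hsB : s ∉ B) : Alternating F B i (!i) 1 s := by
  simpa only [mul_one] using cons hs hsB (base (one_mem B))

theorem mul_base (H : Alternating F B i k n h) (hb : b ∈ B) : Alternating F B i k n (h * b) := by
  induction H with
  | base hb' => exact base (mul_mem hb' hb)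
  | cons hs hsB _ ih => rw [mul_assoc]; exact cons hs hsB ih

theorem base_mul (hF : ∀ i, B ≤ F i) (hb : b ∈ B) (H : Alternating F B i k n h) :
    Alternating F B i k n (b * h) := by
  cases H with
  | base hb' => exact base (mul_mem hb hb')
  | cons hs hsB H =>
    rw [← mul_assoc]
    exact cons (mul_mem (hF _ hb) hs) (fun h => hsB ((mul_mem_cancel_left hb).1 h)) H

theorem mem_of_one (hF : ∀ i, B ≤ F i) (H : Alternating F B i k 1 h) :
    k = (!i) ∧ h ∈ F i ∧ h ∉ B := by
  obtain ⟨s, hs, hsB, b, hb, rfl⟩ := H.exists_cons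
  exact ⟨hb.eq_of_zero.symm, mul_mem hs (hF i hb.mem_of_zero),
    fun h => hsB ((mul_mem_cancel_right hb.mem_of_zero).1 h)⟩

theorem append (hF : ∀ i, B ≤ F i) (H : Alternating F B i j m h) (K : Alternating F B j k n g) :
    Alternating F B i k (m + n) (h * g) := by
  induction H with
  | base hb => rw [Nat.zero_add]; exact base_mul hF hb K
  | cons hs hsB _ ih => rw [mul_assoc, Nat.succ_add]; exact cons hs hsB (ih K)

theorem split (H : Alternating F B i k (m + n) h) :
    ∃ j, ∃ u v, Alternating F B i j m u ∧ Alternating F B j k n v ∧ u * v = h := by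
  induction m generalizing i h with
  | zero => exact ⟨i, 1, h, base (one_mem B), by rwa [Nat.zero_add] at H, one_mul h⟩
  | succ m ih =>
    rw [Nat.add_right_comm] at H
    obtain ⟨s, hs, hsB, h', H', rfl⟩ := exists_cons H
    obtain ⟨j, u, v, hu, hv, rfl⟩ := ih H'
    exact ⟨j, s * u, v, cons hs hsB hu, hv, mul_assoc s u v⟩

theorem inv (hF : ∀ i, B ≤ F i) (H : Alternating F B i k n h) :
    Alternating F B (!k) (!i) n h⁻¹ := by
  induction H with
  | base hb => exact base (inv_mem hb)
  | @cons i _ _ s h hs hsB _ ih =>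
    rw [mul_inv_rev]
    rw [Bool.not_not] at ih
    exact ih.append hF (single (inv_mem hs) (mt inv_mem_iff.1 hsB))

theorem exists_concat (hF : ∀ i, B ≤ F i) (H : Alternating F B i k (n + 1) h) :
    ∃ h', ∃ s ∈ F (!k), s ∉ B ∧ Alternating F B i (!k) n h' ∧ h = h' * s := by
  obtain ⟨j, u, v, hu, hv, rfl⟩ := H.split
  obtain ⟨rfl, hvj, hvB⟩ := hv.mem_of_one hF
  exact ⟨u, v, by rwa [Bool.not_not], hvB, by rwa [Bool.not_not], rfl⟩

theorem exists_mul_syllable (hF : ∀ i, B ≤ F i) (H : Alternating F B i k (n + 1) h)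
    (hs : s ∈ F j) : ∃ k' l, n ≤ l ∧ l ≤ n + 2 ∧ Alternating F B i k' l (h * s) := by
  by_cases hsB : s ∈ B
  · exact ⟨k, n + 1, by omega, by omega, H.mul_base hsB⟩
  obtain rfl | rfl := Bool.eq_or_eq_not j k
  · exact ⟨!j, n + 1 + 1, by omega, le_rfl, H.append hF (single hs hsB)⟩
  obtain ⟨h', t, ht, -, H', rfl⟩ := H.exists_concat hF
  rw [mul_assoc]
  by_cases hts : t * s ∈ B
  · exact ⟨!k, n, le_rfl, by omega, H'.mul_base hts⟩
  · exact ⟨_, n + 1, by omega, by omega, H'.append hF (single (mul_mem ht hs) hts)⟩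

theorem exists_mul (hF : ∀ i, B ≤ F i) (H : Alternating F B i k m h)
    (K : Alternating F B i' k' n g) (hnm : n ≤ m) :
    ∃ k'' l, m ≤ l + n ∧ l ≤ m + n ∧ Alternating F B i k'' l (h * g) := by
  induction K generalizing k m h with
  | base hb => exact ⟨k, m, le_rfl, le_rfl, H.mul_base hb⟩
  | cons hs _ _ ih =>
    obtain ⟨m, rfl⟩ := Nat.exists_eq_succ_of_ne_zero (Nat.ne_zero_of_lt hnm)
    obtain ⟨_, l, hml, hlm, L⟩ := H.exists_mul_syllable hF hs
    obtain ⟨k'', l', hll', hl'l, L'⟩ := ih L (by omega)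
    exact ⟨k'', l', by omega, by omega, by rwa [← mul_assoc]⟩

theorem exists_mul_left (hF : ∀ i, B ≤ F i) (H : Alternating F B i k m h)
    (K : Alternating F B i' k' n g) (hnm : n ≤ m) :
    ∃ i'' l, m ≤ l + n ∧ l ≤ m + n ∧ Alternating F B i'' k l (g * h) := by
  obtain ⟨i'', l, hml, hlm, L⟩ := (H.inv hF).exists_mul hF (K.inv hF) hnm
  exact ⟨!i'', l, hml, hlm, by simpa using L.inv hF⟩

theorem pow (hF : ∀ i, B ≤ F i) (H : Alternating F B i i n h) (r : ℕ) :
    Alternating F B i i (r * n) (h ^ r) := by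
  induction r with
  | zero => simpa only [Nat.zero_mul, pow_zero] using base (one_mem B)
  | succ r ih => rw [Nat.succ_mul, pow_succ]; exact ih.append hF H

theorem zpow (hF : ∀ i, B ≤ F i) (H : Alternating F B i i n h) (r : ℤ) :
    ∃ i', Alternating F B i' i' (r.natAbs * n) (h ^ r) := by
  obtain ⟨r, rfl | rfl⟩ := r.eq_nat_or_neg
  · exact ⟨i, by simpa using H.pow hF r⟩
  · exact ⟨!i, by simpa using (H.pow hF r).inv hF⟩

theorem exists_isConj_not (hF : ∀ i, B ≤ F i) (H : Alternating F B i i (n + 1) g) :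
    ∃ h, IsConj h g ∧ Alternating F B (!i) (!i) (n + 1) h := by
  obtain ⟨s, hs, hsB, h, H', rfl⟩ := H.exists_cons
  exact ⟨h * s, isConj_iff.2 ⟨s, by group⟩, H'.append hF (single hs hsB)⟩

theorem exists_isConj_shorter (hF : ∀ i, B ≤ F i) (H : Alternating F B i (!i) (n + 2) g) :
    ∃ h, IsConj h g ∧ ∃ i' k m, m < n + 2 ∧ Alternating F B i' k m h := by
  obtain ⟨h, s, hs, -, H', rfl⟩ := H.exists_concat hF
  rw [Bool.not_not] at hs H'
  obtain ⟨t, ht, -, h, H'', rfl⟩ := H'.exists_cons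
  refine ⟨s * t * h, isConj_iff.2 ⟨s⁻¹, by group⟩, ?_⟩
  by_cases hst : s * t ∈ B
  · exact ⟨!i, i, n, by omega, H''.base_mul hF hst⟩
  · exact ⟨i, i, n + 1, by omega, H''.cons (mul_mem hs ht) hst⟩

end Alternating

/-- `P` is generated by its subgroups `F true` and `F false`, both containing `B`, and the number of
syllables and the factor of the first syllable of an alternating product are determined by its
value. This is the normal form theorem for `P = F true *_B F false`. -/
structure IsInternalAmalgam (F : Bool → Subgroup P) (B : Subgroup P) : Prop where
  le (i : Bool) : B ≤ F i
  unique {i i' k k' : Bool} {n n' : ℕ} {h : P} (H : Alternating F B i k n h)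
    (H' : Alternating F B i' k' n' h) : n = n' ∧ (n ≠ 0 → i = i')
  iSup_eq_top : ⨆ i, F i = ⊤

namespace IsInternalAmalgam

variable (hA : IsInternalAmalgam F B) {i i' j k k' : Bool} {m n p q : ℕ} {c c' f f' g h x y : P}
include hA

theorem length_unique (H : Alternating F B i k m h) (H' : Alternating F B i' k' n h) : m = n :=
  (hA.unique H H').1

theorem start_unique (H : Alternating F B i k (m + 1) h) (H' : Alternating F B i' k' n h) :
    i = i' :=
  (hA.unique H H').2 m.succ_ne_zero

theorem exists_alternating (h : P) : ∃ i k n, Alternating F B i k n h := by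
  have hh : h ∈ ⨆ i, F i := hA.iSup_eq_top ▸ Subgroup.mem_top h
  refine Subgroup.iSup_induction F (C := fun h => ∃ i k n, Alternating F B i k n h) hh ?_ ?_ ?_
  · intro i s hs
    by_cases hsB : s ∈ B
    · exact ⟨i, i, 0, .base hsB⟩
    · exact ⟨i, !i, 1, .single hs hsB⟩
  · exact ⟨true, true, 0, .base (one_mem B)⟩
  · rintro h g ⟨i, k, m, H⟩ ⟨i', k', n, K⟩
    obtain hnm | hmn := le_total n m
    · obtain ⟨k'', l, -, -, L⟩ := H.exists_mul hA.le K hnm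
      exact ⟨i, k'', l, L⟩
    · obtain ⟨i'', l, -, -, L⟩ := K.exists_mul_left hA.le H hmn
      exact ⟨i'', k', l, L⟩

theorem inv_mul_mem (H : Alternating F B i j m c) (H' : Alternating F B i' j' m c')
    (K : Alternating F B j k p f) (K' : Alternating F B j' k' q f') (h : c * f = c' * f') :
    c⁻¹ * c' ∈ B := by
  have hL := H.append hA.le K
  have hL' := H'.append hA.le K'
  rw [h] at hL
  have hpq : p = q := Nat.add_left_cancel (hA.length_unique hL hL')
  induction m generalizing i i' c c' with
  | zero => exact mul_mem (inv_mem H.mem_of_zero) H'.mem_of_zero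
  | succ m ih =>
    rw [Nat.add_right_comm] at hL
    obtain rfl := hA.start_unique hL hL'
    obtain ⟨s, hs, -, d, D, rfl⟩ := H.exists_cons
    obtain ⟨t, ht, -, d', D', rfl⟩ := H'.exists_cons
    have hdf : t⁻¹ * s * d * f = d' * f' := by
      rw [mul_assoc s, mul_assoc t, ← eq_inv_mul_iff_mul_eq] at h
      rw [mul_assoc, mul_assoc, h, mul_inv_cancel_left, inv_mul_cancel_left]
    have htsB : t⁻¹ * s ∈ B := by
      by_contra htsB
      have L := (D.append hA.le K).cons (mul_mem (inv_mem ht) hs) htsB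
      rw [← mul_assoc, hdf] at L
      have hlength := hA.length_unique L (D'.append hA.le K')
      omega
    have hD := D.base_mul hA.le htsB
    have hcancel := ih hD D' hdf (hdf ▸ hD.append hA.le K) (D'.append hA.le K')
    simpa only [mul_inv_rev, inv_inv, mul_assoc] using hcancel

theorem mem_or_exists_left_coset (i : Bool) (f : P) :
    f ∈ F i ∨ ∃ x ∈ F i, ∃ k n h, Alternating F B (!i) k n h ∧ f = x * h := by
  obtain ⟨i', k, n, H⟩ := hA.exists_alternating f
  obtain rfl | rfl := Bool.eq_or_eq_not i' i
  · cases H with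
    | base hb => exact .inl (hA.le i' hb)
    | cons hs _ H => exact .inr ⟨_, hs, k, _, _, H, rfl⟩
  · exact .inr ⟨1, one_mem _, k, n, f, H, (one_mul f).symm⟩

theorem mem_or_exists_double_coset (i : Bool) (f : P) :
    f ∈ F i ∨ ∃ x ∈ F i, ∃ y ∈ F i, ∃ n h, Alternating F B (!i) i n h ∧ f = x * h * y := by
  obtain hf | ⟨x, hx, k, n, h, H, rfl⟩ := hA.mem_or_exists_left_coset i f
  · exact .inl hf
  obtain rfl | rfl := Bool.eq_or_eq_not k i
  · exact .inr ⟨x, hx, 1, one_mem _, n, h, H, (mul_one _).symm⟩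
  cases n with
  | zero => exact .inl (mul_mem hx (hA.le i H.mem_of_zero))
  | succ n =>
    obtain ⟨h, s, hs, -, H', rfl⟩ := H.exists_concat hA.le
    rw [Bool.not_not] at hs H'
    exact .inr ⟨x, hx, s, hs, n, h, H', (mul_assoc x h s).symm⟩

theorem mem_of_semiconjBy_left (H : Alternating F B (!i) i n f) (hx : x ∈ F i) (hy : y ∈ F i)
    (h : SemiconjBy f y x) : x ∈ B ∧ y ∈ B := by
  by_cases hxB : x ∈ B <;> by_cases hyB : y ∈ B
  · exact ⟨hxB, hyB⟩
  · have := hA.length_unique (H.append hA.le (.single hy hyB)) (h.eq ▸ H.base_mul hA.le hxB)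
    omega
  · have := hA.length_unique (H.cons hx hxB) (h.eq ▸ H.mul_base hyB)
    omega
  · have := hA.start_unique (H.cons hx hxB) (h.eq ▸ H.append hA.le (.single hy hyB))
    simp at this

theorem eq_one_of_semiconjBy (hmal : IsMalnormal B (F i)) (H : Alternating F B i k n f)
    (hn : n ≠ 0) (hx : x ∈ B) (hy : y ∈ B) (h : SemiconjBy f y x) : x = 1 := by
  obtain ⟨n, rfl⟩ := Nat.exists_eq_succ_of_ne_zero hn
  obtain ⟨s, hs, hsB, f, H', rfl⟩ := H.exists_cons
  refine hmal s hs hsB x hx ?_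
  by_contra hsx
  have hf : s⁻¹ * x * s * f = f * y := by
    rw [mul_assoc, mul_assoc, ← h.eq, mul_assoc, inv_mul_cancel_left]
  have L := H'.cons (mul_mem (mul_mem (inv_mem hs) (hA.le i hx)) hs) hsx
  rw [hf] at L
  have := hA.length_unique L (H'.mul_base hy)
  omega

theorem mem_or_exists_semiconjBy (hx : x ∈ F i) (hy : y ∈ F i) (h : SemiconjBy f y x) :
    f ∈ F i ∨ ∃ a ∈ F i, a⁻¹ * x * a ∈ B ∧ ∃ n g, Alternating F B (!i) i n g ∧
      ∃ z ∈ B, SemiconjBy g z (a⁻¹ * x * a) := by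
  obtain hf | ⟨a, ha, b, hb, n, g, H, rfl⟩ := hA.mem_or_exists_double_coset i f
  · exact .inl hf
  have hg : SemiconjBy g (b * y * b⁻¹) (a⁻¹ * x * a) := by
    simpa [mul_assoc] using ((SemiconjBy.conj_mk a⁻¹ x).mul_left h).mul_left
      (SemiconjBy.conj_mk b y).inv_symm_left
  obtain ⟨hxB, hyB⟩ := hA.mem_of_semiconjBy_left H (mul_mem (mul_mem (inv_mem ha) hx) ha)
    (mul_mem (mul_mem hb hy) (inv_mem hb)) hg
  exact .inr ⟨a, ha, hxB, n, g, H, _, hyB, hg⟩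

theorem mem_of_semiconjBy_of_isMalnormal (hmal : IsMalnormal B (F (!i))) (hx : x ∈ F i)
    (hx₁ : x ≠ 1) (hy : y ∈ F i) (h : SemiconjBy f y x) : f ∈ F i := by
  obtain hf | ⟨a, -, hxB, n, g, H, z, hz, hg⟩ := hA.mem_or_exists_semiconjBy hx hy h
  · exact hf
  have := hA.eq_one_of_semiconjBy hmal H H.length_ne_zero hxB hz hg
  rw [mul_assoc, inv_mul_eq_one, eq_comm, mul_eq_right] at this
  exact absurd this hx₁

theorem exists_isConj (g : P) :
    ∃ h, IsConj h g ∧ ((∃ i, h ∈ F i) ∨ ∃ n ≠ 0, Alternating F B true true n h) := by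
  obtain ⟨i, k, n, H⟩ := hA.exists_alternating g
  induction n using Nat.strong_induction_on generalizing g i k with
  | _ n ih =>
    obtain rfl | rfl := Bool.eq_or_eq_not k i
    · match n, k, H with
      | 0, i, H => exact ⟨g, .refl g, .inl ⟨i, hA.le i H.mem_of_zero⟩⟩
      | n + 1, true, H => exact ⟨g, .refl g, .inr ⟨n + 1, n.succ_ne_zero, H⟩⟩
      | n + 1, false, H =>
        obtain ⟨h, hconj, H⟩ := H.exists_isConj_not hA.le
        exact ⟨h, hconj, .inr ⟨n + 1, n.succ_ne_zero, H⟩⟩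
    · match n, H with
      | 0, H => exact absurd H.eq_of_zero.symm (Bool.not_ne_self i)
      | 1, H => exact ⟨g, .refl g, .inl ⟨i, (H.mem_of_one hA.le).2.1⟩⟩
      | n + 2, H =>
        obtain ⟨h, hconj, i', k, m, hm, H⟩ := H.exists_isConj_shorter hA.le
        obtain ⟨h', hconj', hh'⟩ := ih m hm h i' k H
        exact ⟨h', hconj'.trans hconj, hh'⟩

theorem not_isOfFinOrder (H : Alternating F B i i n g) (hn : n ≠ 0) : ¬ IsOfFinOrder g := by
  intro hg
  obtain ⟨r, hr, hgr⟩ := isOfFinOrder_iff_pow_eq_one.1 hg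
  have L := H.pow hA.le r
  rw [hgr] at L
  have := hA.length_unique L (.base (i := i) (one_mem B))
  exact Nat.mul_ne_zero hr.ne' hn this

theorem eq_one_of_isOfFinOrder (hF : ∀ i, ∀ x ∈ F i, IsOfFinOrder x → x = 1)
    (hg : IsOfFinOrder g) : g = 1 := by
  obtain ⟨h, hconj, hh⟩ := hA.exists_isConj g
  have hh₁ := hconj.symm.isOfFinOrder hg
  obtain ⟨i, hi⟩ | ⟨n, hn, H⟩ := hh
  · obtain rfl := hF i h hi hh₁
    exact isConj_one_right.1 hconj
  · exact absurd hh₁ (hA.not_isOfFinOrder H hn)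

theorem classD0At_of_mem_of_isMalnormal_not (htf : ∀ g : P, IsOfFinOrder g → g = 1)
    (hF : ClassD0 (F i)) (hmal : IsMalnormal B (F (!i))) (hg : g ∈ F i) (hg₁ : g ≠ 1) :
    ClassD0At g := by
  refine ⟨F i, hF, ?_⟩
  rintro f ⟨r, s, -, hs, hf⟩
  have hgs : g ^ s ≠ 1 := fun h => hg₁ (htf g (isOfFinOrder_iff_zpow_eq_one.2 ⟨s, hs, h⟩))
  exact hA.mem_of_semiconjBy_of_isMalnormal hmal (zpow_mem hg s) hgs (zpow_mem hg r) hf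

theorem classD0At_of_mem_of_isMalnormal (htf : ∀ g : P, IsOfFinOrder g → g = 1)
    (hF : ∀ i, ClassD0 (F i)) (hmal : IsMalnormal B (F i)) (hg : g ∈ F i) (hg₁ : g ≠ 1) :
    ClassD0At g := by
  by_cases hB : ∃ a ∈ F i, a⁻¹ * g * a ∈ B
  · obtain ⟨a, -, haB⟩ := hB
    have hconj : IsConj g (a⁻¹ * g * a) := isConj_iff.2 ⟨a⁻¹, by rw [inv_inv]⟩
    have hmal' : IsMalnormal B (F (!!i)) := by rwa [Bool.not_not]
    have ha₁ : a⁻¹ * g * a ≠ 1 := fun h => hg₁ (isConj_one_right.1 (h ▸ hconj.symm))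
    exact (hA.classD0At_of_mem_of_isMalnormal_not htf (hF (!i)) hmal' (hA.le _ haB) ha₁).of_isConj
      hconj.symm
  refine ⟨F i, hF i, ?_⟩
  rintro f ⟨r, s, -, hs, hf⟩
  obtain hf | ⟨a, ha, haB, -⟩ := hA.mem_or_exists_semiconjBy (zpow_mem hg s) (zpow_mem hg r) hf
  · exact hf
  have hzpow : (a⁻¹ * g * a) ^ s = a⁻¹ * g ^ s * a := by simpa using conj_zpow (a := a⁻¹) (b := g)
  refine absurd ⟨a, ha, hmal.mem_of_zpow_mem (mul_mem (mul_mem (inv_mem ha) hg) ha)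
    (hzpow ▸ haB) fun h => hg₁ ?_⟩ hB
  have hconj₁ := htf _ (isOfFinOrder_iff_zpow_eq_one.2 ⟨s, hs, h⟩)
  rwa [mul_assoc, inv_mul_eq_one, eq_comm, mul_eq_right] at hconj₁

theorem natAbs_eq_of_semiconjBy (H : Alternating F B i i n g) (hn : n ≠ 0) {r s : ℤ} (hr : r ≠ 0)
    (hs : s ≠ 0) (h : SemiconjBy f (g ^ r) (g ^ s)) : r.natAbs = s.natAbs := by
  obtain ⟨_, _, p, L⟩ := hA.exists_alternating f
  obtain ⟨_, Hr⟩ := H.zpow hA.le (r * (2 * p + 1 : ℕ))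
  obtain ⟨_, Hs⟩ := H.zpow hA.le (s * (2 * p + 1 : ℕ))
  rw [Int.natAbs_mul, Int.natAbs_natCast] at Hr Hs
  have length_le {t : ℤ} (ht : t ≠ 0) : p ≤ t.natAbs * (2 * p + 1) * n := by
    have := Nat.le_mul_of_pos_left (2 * p + 1)
      (Nat.mul_pos (Int.natAbs_pos.2 ht) (Nat.pos_of_ne_zero hn))
    rw [mul_right_comm]
    omega
  obtain ⟨_, l, hl, hl', K⟩ := Hr.exists_mul_left hA.le L (length_le hr)
  obtain ⟨_, l', hl₂, hl₂', K'⟩ := Hs.exists_mul hA.le L (length_le hs)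
  have heq : f * g ^ (r * (2 * p + 1 : ℕ)) = g ^ (s * (2 * p + 1 : ℕ)) * f := by
    simpa only [zpow_mul] using (h.zpow_right _).eq
  obtain rfl := hA.length_unique K (heq ▸ K')
  have le_of_close {a b : ℕ} (hab : a * (2 * p + 1) * n ≤ b * (2 * p + 1) * n + 2 * p) :
      a ≤ b := by
    by_contra! hba
    have hmul := Nat.mul_le_mul_right n (Nat.mul_le_mul_right (2 * p + 1) hba)
    have hgap := Nat.le_mul_of_pos_right (2 * p + 1) (Nat.pos_of_ne_zero hn)
    rw [Nat.succ_mul, Nat.add_mul] at hmul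
    omega
  exact le_antisymm (le_of_close (by omega)) (le_of_close (by omega))

theorem exists_alternating_mul_zpow (H : Alternating F B i i n g) (hn : n ≠ 0) {r : ℤ}
    (hr : r ≠ 0) (h : Commute c (g ^ r)) :
    ∃ (M : ℤ) (l : ℕ), Alternating F B i i l (c * g ^ M) := by
  obtain ⟨_, _, p, L⟩ := hA.exists_alternating c
  have hM : c * g ^ (r.natAbs * (p + 1)) = g ^ (r.natAbs * (p + 1)) * c := by
    rw [pow_mul]
    exact (commute_pow_natAbs h).pow_right (p + 1)
  have hp : p < r.natAbs * (p + 1) * n := by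
    have := Nat.le_mul_of_pos_left (p + 1)
      (Nat.mul_pos (Int.natAbs_pos.2 hr) (Nat.pos_of_ne_zero hn))
    rw [mul_right_comm]
    omega
  have Hpow := H.pow hA.le (r.natAbs * (p + 1))
  obtain ⟨_, l, hl, -, K⟩ := Hpow.exists_mul_left hA.le L hp.le
  obtain ⟨_, l', -, -, K'⟩ := Hpow.exists_mul hA.le L hp.le
  obtain ⟨l, rfl⟩ := Nat.exists_eq_succ_of_ne_zero (by omega : l ≠ 0)
  obtain rfl := hA.start_unique K (hM ▸ K')
  exact ⟨(r.natAbs * (p + 1) : ℕ), l + 1, by rwa [zpow_natCast]⟩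

theorem eq_of_commute_zpow (hmal : IsMalnormal B (F i)) (H : Alternating F B i i n g)
    (hn : n ≠ 0) {r : ℤ} (hr : r ≠ 0) (hc : Commute c (g ^ r)) (hc' : Commute c' (g ^ r))
    (L : Alternating F B i i m c) (L' : Alternating F B i i m c') : c = c' := by
  have hpow {d : P} (hd : Commute d (g ^ r)) : Commute d (g ^ (r.natAbs * m)) := by
    rw [pow_mul]
    exact (commute_pow_natAbs hd).pow_right m
  have Hpow := H.pow hA.le (r.natAbs * m)
  have hm : m ≤ r.natAbs * m * n := by
    rw [mul_right_comm]
    exact Nat.le_mul_of_pos_left m (Nat.mul_pos (Int.natAbs_pos.2 hr) (Nat.pos_of_ne_zero hn))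
  obtain ⟨q, hq⟩ := Nat.exists_eq_add_of_le hm
  rw [hq] at Hpow
  obtain ⟨j, x, y, hx, hy, hxy⟩ := Hpow.split
  have prefix_mem {d : P} (hd : Commute d (g ^ r)) (D : Alternating F B i i m d) : d⁻¹ * x ∈ B :=
    hA.inv_mul_mem D hx Hpow (hy.append hA.le D) (by rw [(hpow hd).eq, ← hxy, mul_assoc])
  have hmem : c⁻¹ * c' ∈ B := by
    simpa [mul_assoc] using mul_mem (prefix_mem hc L) (inv_mem (prefix_mem hc' L'))
  have hcomm : Commute (c⁻¹ * c') (g ^ r.natAbs) :=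
    commute_pow_natAbs (hc.inv_left.mul_left hc')
  exact inv_mul_eq_one.1 (hA.eq_one_of_semiconjBy hmal (H.pow hA.le r.natAbs)
    (Nat.mul_ne_zero (Int.natAbs_ne_zero.2 hr) hn) hmem hmem hcomm.symm)

theorem commute_of_commute_zpow (hmal : IsMalnormal B (F i)) (H : Alternating F B i i n g)
    (hn : n ≠ 0) {r : ℤ} (hr : r ≠ 0) (h : Commute c (g ^ r)) : Commute c g := by
  obtain ⟨M, l, L⟩ := hA.exists_alternating_mul_zpow H hn hr h
  have hg : Commute g (g ^ r) := .self_zpow g r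
  have ha : Commute (c * g ^ M) (g ^ r) := h.mul_left (hg.zpow_left M)
  have hag : Commute (c * g ^ M) g := hA.eq_of_commute_zpow hmal H hn hr (ha.mul_left hg)
    (hg.mul_left ha) (L.append hA.le H) (Nat.add_comm n l ▸ H.append hA.le L)
  simpa using hag.mul_left (Commute.zpow_self g (-M))

theorem commute_of_commute (hmal : IsMalnormal B (F i)) (H : Alternating F B i i n g)
    (hn : n ≠ 0) (hc : Commute c g) (hc' : Commute c' g) : Commute c c' := by
  rw [← zpow_one g] at hc hc'
  obtain ⟨M, l, L⟩ := hA.exists_alternating_mul_zpow H hn one_ne_zero hc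
  obtain ⟨M', l', L'⟩ := hA.exists_alternating_mul_zpow H hn one_ne_zero hc'
  have ha : Commute (c * g ^ M) (g ^ (1 : ℤ)) := hc.mul_left (.zpow_zpow_self g M 1)
  have ha' : Commute (c' * g ^ M') (g ^ (1 : ℤ)) := hc'.mul_left (.zpow_zpow_self g M' 1)
  have haa' : Commute (c * g ^ M) (c' * g ^ M') :=
    hA.eq_of_commute_zpow hmal H hn one_ne_zero (ha.mul_left ha') (ha'.mul_left ha)
      (L.append hA.le L') (Nat.add_comm l l' ▸ L'.append hA.le L)
  rw [zpow_one] at hc hc'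
  have hac' : Commute (c * g ^ M) c' := by
    simpa using haa'.mul_right ((hc.mul_left (.zpow_self g M)).zpow_right (-M'))
  simpa using hac'.mul_left (hc'.symm.zpow_left (-M))

theorem pow_mem_zpowers_of_commute (hmal : IsMalnormal B (F i)) (H : Alternating F B i i n g)
    (hn : n ≠ 0) (h : Commute c g) : c ^ n ∈ Subgroup.zpowers g := by
  rw [← zpow_one g] at h
  obtain ⟨M, l, L⟩ := hA.exists_alternating_mul_zpow H hn one_ne_zero h
  have ha : Commute (c * g ^ M) (g ^ (1 : ℤ)) := h.mul_left (.zpow_zpow_self g M 1)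
  have hpow : (c * g ^ M) ^ n = g ^ l :=
    hA.eq_of_commute_zpow hmal H hn one_ne_zero (ha.pow_left n) (.pow_left (.self_zpow g 1) l)
      (L.pow hA.le n) (Nat.mul_comm l n ▸ H.pow hA.le l)
  rw [zpow_one] at h
  rw [(h.zpow_right M).mul_pow, ← eq_mul_inv_iff_mul_eq] at hpow
  rw [hpow]
  exact mul_mem (pow_mem (Subgroup.mem_zpowers g) l)
    (inv_mem (pow_mem (Subgroup.zpow_mem_zpowers g M) n))

theorem not_semiconjBy_zpow_neg (htf : ∀ g : P, IsOfFinOrder g → g = 1)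
    (hmal : IsMalnormal B (F i)) (H : Alternating F B i i n g) (hn : n ≠ 0) {r : ℤ} (hr : r ≠ 0) :
    ¬ SemiconjBy f (g ^ (-r)) (g ^ r) := by
  intro h
  have hneg : SemiconjBy f (g ^ r) (g ^ (-r)) := by
    simpa only [zpow_neg, inv_inv] using h.inv_right
  have hsq : Commute (f ^ 2) g :=
    hA.commute_of_commute_zpow hmal H hn hr (by rw [sq]; exact h.mul_left hneg)
  obtain ⟨q, hq⟩ := hA.pow_mem_zpowers_of_commute hmal H hn hsq
  have hf : Commute f g := by
    by_cases hq₀ : q = 0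
    · have hfpow : f ^ (2 * n) = 1 := by rw [pow_mul, ← hq, hq₀]; exact zpow_zero g
      rw [htf f (isOfFinOrder_iff_pow_eq_one.2 ⟨2 * n, by omega, hfpow⟩)]
      exact .one_left g
    · refine hA.commute_of_commute_zpow hmal H hn hq₀ ?_
      rw [show g ^ q = _ from hq]
      exact ((Commute.refl f).pow_right 2).pow_right n
  have hgr : g ^ (-r) = g ^ r := mul_left_cancel (h.eq.trans (hf.zpow_right r).symm.eq)
  have := injective_zpow_iff_not_isOfFinOrder.2 (hA.not_isOfFinOrder H hn) hgr
  omega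

theorem powerCommensurator_le_centralizer (htf : ∀ g : P, IsOfFinOrder g → g = 1)
    (hmal : IsMalnormal B (F i)) (H : Alternating F B i i n g) (hn : n ≠ 0) :
    powerCommensurator g ≤ Subgroup.centralizer {g} := by
  rintro f ⟨r, s, hr, hs, hf⟩
  rw [Subgroup.mem_centralizer_singleton_iff]
  obtain rfl | rfl := Int.natAbs_eq_natAbs_iff.1 (hA.natAbs_eq_of_semiconjBy H hn hr hs hf)
  · exact hA.commute_of_commute_zpow hmal H hn hs hf
  · exact absurd hf (hA.not_semiconjBy_zpow_neg htf hmal H hn hs)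

theorem isCyclic_centralizer (htf : ∀ g : P, IsOfFinOrder g → g = 1)
    (hmal : IsMalnormal B (F i)) (H : Alternating F B i i n g) (hn : n ≠ 0) :
    IsCyclic (Subgroup.centralizer {g}) := by
  have commute_self (c : Subgroup.centralizer {g}) : Commute (c : P) g :=
    Subgroup.mem_centralizer_singleton_iff.1 c.2
  have commute (c c' : Subgroup.centralizer {g}) : Commute (c : P) c' :=
    hA.commute_of_commute hmal H hn (commute_self c) (commute_self c')
  let φ : Subgroup.centralizer {g} →* Subgroup.zpowers g :=
    { toFun c := ⟨(c : P) ^ n, hA.pow_mem_zpowers_of_commute hmal H hn (commute_self c)⟩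
      map_one' := Subtype.ext (one_pow n)
      map_mul' c c' := Subtype.ext ((commute c c').mul_pow n) }
  refine isCyclic_of_injective φ ((injective_iff_map_eq_one φ).2 fun c hc => Subtype.ext ?_)
  exact htf c (isOfFinOrder_iff_pow_eq_one.2 ⟨n, Nat.pos_of_ne_zero hn, congrArg Subtype.val hc⟩)

theorem classD0At_of_alternating (htf : ∀ g : P, IsOfFinOrder g → g = 1)
    (hmal : IsMalnormal B (F i)) (H : Alternating F B i i n g) (hn : n ≠ 0) : ClassD0At g := by
  have := hA.isCyclic_centralizer htf hmal H hn
  have hinf : Infinite (Subgroup.centralizer {g}) :=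
    ((infinite_zpowers.2 (hA.not_isOfFinOrder H hn)).mono (Subgroup.zpowers_le.2
      (Subgroup.mem_centralizer_singleton_iff.2 rfl))).to_subtype
  exact ⟨_, .of_isCyclic, hA.powerCommensurator_le_centralizer htf hmal H hn⟩

theorem classD0 (hF : ∀ i, ClassD0 (F i)) (hmal : IsMalnormal B (F true)) : ClassD0 P := by
  have htf (g : P) : IsOfFinOrder g → g = 1 := by
    refine hA.eq_one_of_isOfFinOrder fun i x hx hfin => ?_
    have := (hF i).isMulTorsionFree
    lift x to F i using hx
    rw [Submonoid.isOfFinOrder_coe (H := (F i).toSubmonoid), isOfFinOrder_iff_eq_one] at hfin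
    rw [hfin, Subgroup.coe_one]
  refine .of_classD0At fun g hg => ?_
  obtain ⟨h, hconj, hh⟩ := hA.exists_isConj g
  have hh₁ : h ≠ 1 := by
    rintro rfl
    exact hg (isConj_one_right.1 hconj)
  refine ClassD0At.of_isConj ?_ hconj
  obtain ⟨_ | _, hi⟩ | ⟨n, hn, H⟩ := hh
  · exact hA.classD0At_of_mem_of_isMalnormal_not htf (hF false) hmal hi hh₁
  · exact hA.classD0At_of_mem_of_isMalnormal htf hF hmal hi hh₁
  · exact hA.classD0At_of_alternating htf hmal H hn

end IsInternalAmalgam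

end Alternating

section Pushout

open Monoid PushoutI

variable {K : Bool → Type*} {H : Type*} [∀ i, Group (K i)] [Group H] {φ : ∀ i, H →* K i}

theorem Alternating.exists_normalWord (d : NormalWord.Transversal φ) {i k : Bool} {n : ℕ}
    {h : PushoutI φ} (hh : Alternating (fun i => (of i).range) (PushoutI.base φ).range i k n h) :
    ∃ w : NormalWord d, w.prod = h ∧ w.toList.map Sigma.fst = List.iterate not i n := by
  induction hh with
  | base hb =>
    obtain ⟨y, rfl⟩ := hb
    exact ⟨⟨.empty, y, by simp [CoprodI.Word.empty]⟩, by simp [NormalWord.prod], rfl⟩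
  | @cons i _ n s h hs hsB _ ih =>
    obtain ⟨x, rfl⟩ := hs
    obtain ⟨w, rfl, hw⟩ := ih
    have hx : x ∉ (φ i).range := by
      rintro ⟨y, rfl⟩
      exact hsB ⟨y, (of_apply_eq_base φ i y).symm⟩
    have hfst : w.fstIdx ≠ some i := by
      rw [CoprodI.Word.fstIdx, ← List.head?_map, hw]
      cases n <;> simp
    exact ⟨.cons x w hfst hx, NormalWord.prod_cons x w hfst hx,
      by simp [NormalWord.cons, CoprodI.Word.cons, hw]⟩

theorem isInternalAmalgam_pushoutI (hφ : ∀ i, Function.Injective (φ i)) :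
    IsInternalAmalgam (fun i => (of (φ := φ) i).range) (base φ).range where
  le i := by
    rintro _ ⟨y, rfl⟩
    exact ⟨φ i y, of_apply_eq_base φ i y⟩
  unique {i i' _ _ n n' _} H H' := by
    obtain ⟨d⟩ := NormalWord.transversal_nonempty φ hφ
    obtain ⟨w, rfl, hl⟩ := H.exists_normalWord d
    obtain ⟨w', hw', hl'⟩ := H'.exists_normalWord d
    obtain rfl := NormalWord.prod_injective hw'
    have hll' := hl.symm.trans hl'
    obtain rfl : n = n' := by simpa using congrArg List.length hll'
    refine ⟨rfl, fun hn => ?_⟩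
    obtain ⟨n, rfl⟩ := Nat.exists_eq_succ_of_ne_zero hn
    exact (List.cons.inj hll').1
  iSup_eq_top := by
    refine (Subgroup.eq_top_iff' _).2 fun x => ?_
    induction x using PushoutI.induction_on with
    | of i y => exact Subgroup.mem_iSup_of_mem i ⟨y, rfl⟩
    | base y => exact Subgroup.mem_iSup_of_mem true ⟨φ true y, of_apply_eq_base φ true y⟩
    | mul x y hx hy => exact mul_mem hx hy

theorem classD0_pushoutI (hφ : ∀ i, Function.Injective (φ i)) (hK : ∀ i, ClassD0 (K i))
    (hmal : IsMalnormal (φ true).range ⊤) : ClassD0 (PushoutI φ) := by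
  refine (isInternalAmalgam_pushoutI hφ).classD0
    (fun i => (hK i).of_mulEquiv (MonoidHom.ofInjective (of_injective hφ i))) ?_
  have hbase := hmal.map (of_injective hφ true)
  rwa [← MonoidHom.range_comp, of_comp_eq_base, ← MonoidHom.range_eq_map] at hbase

end Pushout

section AmalgamatedFreeProduct

variable {H : Type u} {A : Type v} {C : Type w} {P : Type x} [Group H] [Group A] [Group C] [Group P]
  {φ : H →* A} {ψ : H →* C} {ja : A →* P} {jc : C →* P}

/-- The two factors of an amalgamated free product as a family indexed by `Bool`. The universe is
adjustable because `IsAmalgamatedFreeProduct` tests the universal property in one fixed universe. -/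
def AmalgamFactor (A : Type v) (C : Type w) : Bool → Type (max v w x)
  | true => ULift.{max w x} A
  | false => ULift.{max v x} C

namespace AmalgamFactor

instance : ∀ i, Group (AmalgamFactor.{v, w, x} A C i)
  | true => inferInstanceAs (Group (ULift.{max w x} A))
  | false => inferInstanceAs (Group (ULift.{max v x} C))

/-- The first factor, with its universe lifted. -/
def fstEquiv (A : Type v) (C : Type w) [Group A] [Group C] :
    A ≃* AmalgamFactor.{v, w, x} A C true :=
  MulEquiv.ulift.{v, max w x}.symm

/-- The second factor, with its universe lifted. -/
def sndEquiv (A : Type v) (C : Type w) [Group A] [Group C] :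
    C ≃* AmalgamFactor.{v, w, x} A C false :=
  MulEquiv.ulift.{w, max v x}.symm

/-- The family of homomorphisms into the factors given by `φ` and `ψ`. -/
def homInto (φ : H →* A) (ψ : H →* C) : ∀ i, H →* AmalgamFactor.{v, w, x} A C i
  | true => (fstEquiv A C).toMonoidHom.comp φ
  | false => (sndEquiv A C).toMonoidHom.comp ψ

/-- The family of homomorphisms out of the factors given by `ja` and `jc`. -/
def homFrom (ja : A →* P) (jc : C →* P) : ∀ i, AmalgamFactor.{v, w, max u x} A C i →* P
  | true => ja.comp (fstEquiv A C).symm.toMonoidHom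
  | false => jc.comp (sndEquiv A C).symm.toMonoidHom

theorem homInto_injective (hφ : Function.Injective φ) (hψ : Function.Injective ψ) :
    ∀ i, Function.Injective (homInto.{u, v, w, x} φ ψ i)
  | true => (fstEquiv A C).injective.comp hφ
  | false => (sndEquiv A C).injective.comp hψ

theorem homFrom_comp_homInto (h : ja.comp φ = jc.comp ψ) :
    ∀ i, (homFrom.{u} ja jc i).comp (homInto φ ψ i) = ja.comp φ
  | true => rfl
  | false => h.symm

theorem classD0 (hA : ClassD0 A) (hC : ClassD0 C) : ∀ i, ClassD0 (AmalgamFactor.{v, w, x} A C i)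
  | true => hA.of_mulEquiv (fstEquiv A C)
  | false => hC.of_mulEquiv (sndEquiv A C)

theorem isMalnormal_range_homInto (h : IsMalnormal φ.range ⊤) :
    IsMalnormal (homInto.{u, v, w, x} φ ψ true).range ⊤ := by
  have hlift := h.map (j := (fstEquiv A C).toMonoidHom) (fstEquiv A C).injective
  rwa [← MonoidHom.range_comp, Subgroup.map_top_of_surjective _ (fstEquiv A C).surjective] at hlift

end AmalgamFactor

namespace IsAmalgamatedFreeProduct

theorem hom_ext (hP : IsAmalgamatedFreeProduct φ ψ ja jc) {f g : P →* P}
    (ha : f.comp ja = g.comp ja) (hc : f.comp jc = g.comp jc) : f = g := by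
  let lift : P →* ULift.{max u v w} P := MulEquiv.ulift.symm.toMonoidHom
  obtain ⟨_, -, hunique⟩ := hP.2 (ULift.{max u v w} P) (lift.comp (g.comp ja))
    (lift.comp (g.comp jc)) (by simp only [MonoidHom.comp_assoc, hP.1])
  have hfg : lift.comp f = lift.comp g :=
    (hunique _ ⟨by rw [MonoidHom.comp_assoc, ha], by rw [MonoidHom.comp_assoc, hc]⟩).trans
      (hunique _ ⟨rfl, rfl⟩).symm
  exact (MonoidHom.cancel_left MulEquiv.ulift.symm.injective).1 hfg

theorem nonempty_mulEquiv_pushoutI (hP : IsAmalgamatedFreeProduct φ ψ ja jc) :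
    Nonempty (P ≃* Monoid.PushoutI (AmalgamFactor.homInto.{u, v, w, max u x} φ ψ)) := by
  let κ := AmalgamFactor.homInto.{u, v, w, max u x} φ ψ
  let fst := AmalgamFactor.fstEquiv.{v, w, max u x} A C
  let snd := AmalgamFactor.sndEquiv.{v, w, max u x} A C
  obtain ⟨e, ⟨hea, hec⟩, -⟩ := hP.2 (Monoid.PushoutI κ)
    ((Monoid.PushoutI.of true).comp fst.toMonoidHom)
    ((Monoid.PushoutI.of false).comp snd.toMonoidHom)
    ((Monoid.PushoutI.of_comp_eq_base (φ := κ) true).trans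
      (Monoid.PushoutI.of_comp_eq_base (φ := κ) false).symm)
  let d : Monoid.PushoutI κ →* P := Monoid.PushoutI.lift (AmalgamFactor.homFrom.{u} ja jc)
    (ja.comp φ) (AmalgamFactor.homFrom_comp_homInto hP.1)
  have hda (a : A) : d (.of true (fst a)) = ja a := Monoid.PushoutI.lift_of ..
  have hdc (c : C) : d (.of false (snd c)) = jc c := Monoid.PushoutI.lift_of ..
  have hea' (a : A) : e (ja a) = .of true (fst a) := DFunLike.congr_fun hea a
  have hec' (c : C) : e (jc c) = .of false (snd c) := DFunLike.congr_fun hec c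
  have hde : d.comp e = .id P := hP.hom_ext
    (MonoidHom.ext fun a => by simp [hea', hda]) (MonoidHom.ext fun c => by simp [hec', hdc])
  have hed : e.comp d = .id _ := by
    refine Monoid.PushoutI.hom_ext_nonempty (Bool.rec ?_ ?_) <;> ext y
    · obtain ⟨c, rfl⟩ := snd.surjective y
      simp [hec', hdc]
    · obtain ⟨a, rfl⟩ := fst.surjective y
      simp [hea', hda]
  exact ⟨e.toMulEquiv d hde hed⟩

end IsAmalgamatedFreeProduct

theorem classD0_of_amalgamated_root_adjunction_general (hA : ClassD0 A) (hC : ClassD0 C)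
    (hφ : Function.Injective φ) (hψ : Function.Injective ψ) (hmal : IsMalnormal φ.range ⊤)
    (hP : IsAmalgamatedFreeProduct φ ψ ja jc) : ClassD0 P := by
  obtain ⟨e⟩ := hP.nonempty_mulEquiv_pushoutI
  exact (classD0_pushoutI (AmalgamFactor.homInto_injective hφ hψ) (AmalgamFactor.classD0 hA hC)
    (AmalgamFactor.isMalnormal_range_homInto hmal)).of_mulEquiv e.symm

end AmalgamatedFreeProduct

/-- **Corollary 6.2.** If `G ∈ 𝒟₀`, `u ∈ G` is indivisible, and `m ≠ 0`, then the free
product with amalgamation `H = G *_{(u = xᵐ)} ⟨x⟩` is also in `𝒟₀`.  The amalgamated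
product is any pushout `P` of `ℤ → G, 1 ↦ u` and `ℤ → ℤ = ⟨x⟩, 1 ↦ m`. -/
theorem classD0_of_amalgamated_root_adjunction
    {G : Type u} [Group G] (hG : ClassD0 G)
    (u : G) (hu : Indivisible u)
    (m : ℤ) (hm : m ≠ 0)
    {P : Type u} [Group P] (jG : G →* P) (jx : Multiplicative ℤ →* P)
    (hP : IsAmalgamatedFreeProduct (zpowersHom G u)
      (zpowersHom (Multiplicative ℤ) (Multiplicative.ofAdd m)) jG jx) :
    ClassD0 P := by
  have := hG.isMulTorsionFree
  have hmal : IsMalnormal (zpowersHom G u).range ⊤ := hG.isMalnormal_zpowers hu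
  exact classD0_of_amalgamated_root_adjunction_general hG .multiplicative_int
    (injective_zpowersHom hu.ne_one) (injective_zpowersHom (ofAdd_eq_one.not.2 hm)) hmal hP
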